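/- arXiv:2206.00606 — 2 statements merged into one kernel-verified Lean document; each statement's English description precedes it below -/
import Mathlib

section
/- Let G₁ ∈ ℝ^{m×n₁}, G₂ ∈ ℝ^{m×n₂}, H₁ ∈ ℝ^{n₁×d₁}, H₂ ∈ ℝ^{n₂×d₂}, W₁ ∈ ℝ^{d₁×d'}, W₂ ∈ ℝ^{d₂×d'}, and let β : ℝ → ℝ be applied entrywise to matrices. For any permutations σ of {1, …, m}, τ₁ of {1, …, n₁} and τ₂ of {1, …, n₂}, with permutation matrices P_σ, P_{τ₁}, P_{τ₂}, one has β( (P_σ G₁ P_{τ₁}ᵀ)(P_{τ₁} H₁) W₁ + (P_σ G₂ P_{τ₂}ᵀ)(P_{τ₂} H₂) W₂ ) = P_σ · β( G₁ H₁ W₁ + G₂ H₂ W₂ ). Hence the CC-convolutional merge node is a permutation-equivariant merge node. -/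
open Matrix

/-- The permutation matrix of a permutation `σ` of a finite index set `I`:
entry `(a, b)` is `1` if `a = σ b` and `0` otherwise. -/
def permMat {I : Type*} [Fintype I] [DecidableEq I] (σ : Equiv.Perm I) : Matrix I I ℝ :=
  fun a b => if a = σ b then 1 else 0

theorem permMat_mul_apply_aux {I J : Type*} [Fintype I] [DecidableEq I] (σ : Equiv.Perm I)
    (A : Matrix I J ℝ) (i : I) (j : J) : (permMat σ * A) i j = A (σ.symm i) j := by
  rw [Matrix.mul_apply, Finset.sum_eq_single (σ.symm i)]
  · simp [permMat]
  · intro b _ hb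
    have : i ≠ σ b := fun h => hb (by simp [h])
    simp [permMat, this]
  · simp

theorem permMat_transpose_mul_aux {I : Type*} [Fintype I] [DecidableEq I] (σ : Equiv.Perm I) :
    (permMat σ)ᵀ * permMat σ = 1 := by
  ext i j
  rw [Matrix.mul_apply, Finset.sum_eq_single (σ i)]
  · simp [permMat, Matrix.one_apply]
  · intro b _ hb
    simp [permMat, hb]
  · simp

/-- The CC-convolutional merge node
`(H₁, H₂) ↦ β(G₁ H₁ W₁ + G₂ H₂ W₂)` (with activation `β` applied entrywise) is a
permutation-equivariant merge node: transforming the cochain maps by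
`G_i ↦ P_σ G_i P_{τ_i}ᵀ` and the inputs by `H_i ↦ P_{τ_i} H_i` multiplies the output
by `P_σ`. -/
theorem stmt_12 {m n₁ n₂ d₁ d₂ d' : ℕ}
    (G₁ : Matrix (Fin m) (Fin n₁) ℝ) (G₂ : Matrix (Fin m) (Fin n₂) ℝ)
    (H₁ : Matrix (Fin n₁) (Fin d₁) ℝ) (H₂ : Matrix (Fin n₂) (Fin d₂) ℝ)
    (W₁ : Matrix (Fin d₁) (Fin d') ℝ) (W₂ : Matrix (Fin d₂) (Fin d') ℝ)
    (β : ℝ → ℝ)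
    (σ : Equiv.Perm (Fin m)) (τ₁ : Equiv.Perm (Fin n₁)) (τ₂ : Equiv.Perm (Fin n₂)) :
    ((permMat σ * G₁ * (permMat τ₁)ᵀ) * (permMat τ₁ * H₁) * W₁ +
      (permMat σ * G₂ * (permMat τ₂)ᵀ) * (permMat τ₂ * H₂) * W₂).map β =
    permMat σ * ((G₁ * H₁ * W₁ + G₂ * H₂ * W₂).map β) := by
  have key : ∀ {n d : ℕ} (G : Matrix (Fin m) (Fin n) ℝ) (H : Matrix (Fin n) (Fin d) ℝ)
      (W : Matrix (Fin d) (Fin d') ℝ) (τ : Equiv.Perm (Fin n)),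
      (permMat σ * G * (permMat τ)ᵀ) * (permMat τ * H) * W = permMat σ * (G * H * W) := by
    intro n d G H W τ
    rw [Matrix.mul_assoc (permMat σ * G), ← Matrix.mul_assoc (permMat τ)ᵀ,
      permMat_transpose_mul_aux, Matrix.one_mul]
    simp only [Matrix.mul_assoc]
  rw [key, key, ← Matrix.mul_add]
  ext i j
  rw [permMat_mul_apply_aux, Matrix.map_apply, Matrix.map_apply, permMat_mul_apply_aux]
end

section
/- Let G₁ ∈ ℝ^{m×n₁}, G₂ ∈ ℝ^{m×n₂}, H₁ ∈ ℝ^{n₁×d₁}, H₂ ∈ ℝ^{n₂×d₂}, W₁ ∈ ℝ^{d₁×d'}, W₂ ∈ ℝ^{d₂×d'}. Let D₀ ∈ ℝ^{m×m}, D₁ ∈ ℝ^{n₁×n₁}, D₂ ∈ ℝ^{n₂×n₂} be diagonal matrices all of whose diagonal entries are ±1, and let β : ℝ → ℝ be an odd function (β(−t) = −β(t)) applied entrywise. Then β( (D₀ G₁ D₁)(D₁ H₁) W₁ + (D₀ G₂ D₂)(D₂ H₂) W₂ ) = D₀ · β( G₁ H₁ W₁ + G₂ H₂ W₂ ). In particular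 each D_i satisfies D_i² = I, and the CC-convolutional merge node with odd activation is an orientation-equivariant merge node. -/
open Matrix

/-- Let `D₀, D₁, D₂` be signed diagonal matrices (diagonal entries
`±1`) and `β` an odd activation applied entrywise. Then each `D_i` squares to the
identity, and the CC-convolutional merge node `(H₁, H₂) ↦ β(G₁ H₁ W₁ + G₂ H₂ W₂)` is
orientation equivariant:
`β((D₀ G₁ D₁)(D₁ H₁) W₁ + (D₀ G₂ D₂)(D₂ H₂) W₂) = D₀ β(G₁ H₁ W₁ + G₂ H₂ W₂)`. -/
theorem stmt_13 {m n₁ n₂ d₁ d₂ d' : ℕ}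
    (G₁ : Matrix (Fin m) (Fin n₁) ℝ) (G₂ : Matrix (Fin m) (Fin n₂) ℝ)
    (H₁ : Matrix (Fin n₁) (Fin d₁) ℝ) (H₂ : Matrix (Fin n₂) (Fin d₂) ℝ)
    (W₁ : Matrix (Fin d₁) (Fin d') ℝ) (W₂ : Matrix (Fin d₂) (Fin d') ℝ)
    (d₀ : Fin m → ℝ) (d₁v : Fin n₁ → ℝ) (d₂v : Fin n₂ → ℝ)
    (h₀ : ∀ i, d₀ i = 1 ∨ d₀ i = -1)
    (h₁ : ∀ i, d₁v i = 1 ∨ d₁v i = -1)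
    (h₂ : ∀ i, d₂v i = 1 ∨ d₂v i = -1)
    (D₀ : Matrix (Fin m) (Fin m) ℝ) (hD₀ : D₀ = Matrix.diagonal d₀)
    (D₁ : Matrix (Fin n₁) (Fin n₁) ℝ) (hD₁ : D₁ = Matrix.diagonal d₁v)
    (D₂ : Matrix (Fin n₂) (Fin n₂) ℝ) (hD₂ : D₂ = Matrix.diagonal d₂v)
    (β : ℝ → ℝ) (hβ : ∀ t : ℝ, β (-t) = -β t) :
    (D₀ * D₀ = 1 ∧ D₁ * D₁ = 1 ∧ D₂ * D₂ = 1) ∧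
    ((D₀ * G₁ * D₁) * (D₁ * H₁) * W₁ + (D₀ * G₂ * D₂) * (D₂ * H₂) * W₂).map β =
      D₀ * ((G₁ * H₁ * W₁ + G₂ * H₂ * W₂).map β) := by
  have key : ∀ {n : ℕ} (v : Fin n → ℝ), (∀ i, v i = 1 ∨ v i = -1) →
      Matrix.diagonal v * Matrix.diagonal v = 1 := by
    intro n v hv
    rw [Matrix.diagonal_mul_diagonal, ← Matrix.diagonal_one]
    congr 1
    funext i
    rcases hv i with h | h <;> simp [h]
  have e₁ : D₁ * D₁ = 1 := by rw [hD₁]; exact key _ h₁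
  have e₂ : D₂ * D₂ = 1 := by rw [hD₂]; exact key _ h₂
  refine ⟨⟨by rw [hD₀]; exact key _ h₀, e₁, e₂⟩, ?_⟩
  have a₁ : (D₀ * G₁ * D₁) * (D₁ * H₁) * W₁ = D₀ * (G₁ * H₁ * W₁) := by
    rw [Matrix.mul_assoc (D₀ * G₁), ← Matrix.mul_assoc D₁, e₁, Matrix.one_mul]
    simp only [Matrix.mul_assoc]
  have a₂ : (D₀ * G₂ * D₂) * (D₂ * H₂) * W₂ = D₀ * (G₂ * H₂ * W₂) := by
    rw [Matrix.mul_assoc (D₀ * G₂), ← Matrix.mul_assoc D₂, e₂, Matrix.one_mul]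
    simp only [Matrix.mul_assoc]
  rw [a₁, a₂, ← Matrix.mul_add, hD₀]
  ext i j
  rw [Matrix.map_apply, Matrix.diagonal_mul, Matrix.diagonal_mul, Matrix.map_apply]
  rcases h₀ i with h | h <;> rw [h]
  · rw [one_mul, one_mul]
  · rw [neg_one_mul, neg_one_mul, hβ]
end
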